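/- B₂ cancellation lemma (the lemma in Section 6 of the paper, for X_{III}): the composite 𝒦_{(0,−1),2} ∘ 𝒦_{(1,0),1} ∘ 𝒦_{(1,1),2} ∘ 𝒦_{(1,2),1} ∘ 𝒦_{(0,1),2} ∘ 𝒦_{(−1,0),1} of the six wall-crossing automorphisms of K = ℂ(x,y) (with wall function (1+z^{γ_i}) for i odd and (1+z^{γ_i})² for i even, where γ₁ = (−1,0), γ₂ = (0,1), γ₃ = (1,2), γ₄ = (1,1), γ₅ = (1,0), γ₆ = (0,−1)) sends x ↦ xy² and y ↦ x^{−1}y^{−1}; equivalently it sends z^μ ↦ z^{M^{−1}μ} for every μ ∈ ℤ², where M : ℤ² → ℤ² is the monodromy with M(1,0) = (−1,−2) and M(0,1) = (1,1). -/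

import Mathlib

open MvPolynomial

noncomputable section

/-- `K = ℂ(x,y)`, the field of rational functions in two variables over `ℂ`. -/
abbrev K : Type := FractionRing (MvPolynomial (Fin 2) ℂ)

/-- The rational function `x`. -/
noncomputable def xx : K := algebraMap (MvPolynomial (Fin 2) ℂ) K (X 0)

/-- The rational function `y`. -/
noncomputable def yy : K := algebraMap (MvPolynomial (Fin 2) ℂ) K (X 1)

/-- `z^μ = x^m y^n` for `μ = (m,n) ∈ ℤ²`. -/
noncomputable def zmon (μ : ℤ × ℤ) : K := xx ^ μ.1 * yy ^ μ.2

/-- `⟨μ,γ⟩ = m b − n a` for `μ = (m,n)`, `γ = (a,b)`. -/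
def pairing (μ γ : ℤ × ℤ) : ℤ := μ.1 * γ.2 - μ.2 * γ.1

/-- `Φ` is the wall-crossing transformation `𝒦_{γ,d}`: the `ℂ`-algebra automorphism of `K`
satisfying `𝒦_{γ,d}(z^μ) = z^μ (1+z^γ)^{d⟨μ,γ⟩}` for all `μ ∈ ℤ²`. -/
def IsWallCrossing (d : ℤ) (γ : ℤ × ℤ) (Φ : K ≃ₐ[ℂ] K) : Prop :=
  ∀ μ : ℤ × ℤ, Φ (zmon μ) = zmon μ * (1 + zmon γ) ^ (d * pairing μ γ)

/-!
Put `γ₀ = (-1, -1)` and `γ₇ = (-1, -2)`, so that `γᵢ₋₁ + γᵢ₊₁ = dᵢ γᵢ` and `⟨γᵢ₋₁, γᵢ⟩ = -1` for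
`1 ≤ i ≤ 6`, where `dᵢ` is the exponent of the `i`-th wall. Since `𝒦ᵢ₊₁` fixes `z^{γᵢ₊₁}`, the
elements `bᵢ = (𝒦₆ ∘ ⋯ ∘ 𝒦ᵢ₊₁)(z^{-γᵢ})`, with `b₇ = z^{-γ₇}`, satisfy the exchange relations
`bᵢ₋₁ bᵢ₊₁ = (1 + bᵢ)^{dᵢ}` of the cluster algebra of type `B₂`, whose sequence of cluster variables
has period six. Hence `b₀ = b₆` and `b₁ = b₇`, which say that the full composite sends `xy ↦ y` and,
since `𝒦₁` fixes `x`, that it sends `x ↦ xy²`.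
-/

section Field

variable {F : Type*} [Field F]

theorem exchange_B2_periodic {b₀ b₁ b₂ b₃ b₄ b₅ b₆ b₇ : F}
    (hb₂ : b₂ ≠ 0) (hb₃ : b₃ ≠ 0) (hb₄ : b₄ ≠ 0) (hb₅ : b₅ ≠ 0) (hb₆ : b₆ ≠ 0) (hb₇ : b₇ ≠ 0)
    (h₁ : b₀ * b₂ = 1 + b₁) (h₂ : b₁ * b₃ = (1 + b₂) ^ 2)
    (h₃ : b₂ * b₄ = 1 + b₃) (h₄ : b₃ * b₅ = (1 + b₄) ^ 2)
    (h₅ : b₄ * b₆ = 1 + b₅) (h₆ : b₅ * b₇ = (1 + b₆) ^ 2) :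
    b₀ = b₆ ∧ b₁ = b₇ := by
  -- Each `bᵢ` is a Laurent polynomial in `b₆` and `b₇`; below, with denominators cleared.
  have one_add_b₆_ne : 1 + b₆ ≠ 0 := by
    rw [← pow_ne_zero_iff two_ne_zero, ← h₆]
    exact mul_ne_zero hb₅ hb₇
  have hb₄_eq : b₆ * b₇ * b₄ = b₇ + (1 + b₆) ^ 2 := by
    linear_combination b₇ * h₅ + h₆
  have hb₃_eq : b₆ ^ 2 * b₇ * b₃ = (1 + b₆ + b₇) ^ 2 := by
    have one_add_b₄ : b₆ * b₇ * (1 + b₄) = (1 + b₆) * (1 + b₆ + b₇) := by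
      linear_combination hb₄_eq
    apply mul_left_cancel₀ (pow_ne_zero 2 one_add_b₆_ne)
    linear_combination -b₇ * b₆ ^ 2 * b₃ * h₆ + (b₆ * b₇) ^ 2 * h₄ +
      (b₆ * b₇ * (1 + b₄) + (1 + b₆) * (1 + b₆ + b₇)) * one_add_b₄
  have hb₂_eq : b₆ * b₂ = 1 + b₇ := by
    apply mul_left_cancel₀ (mul_ne_zero (mul_ne_zero hb₆ hb₇) hb₄)
    linear_combination b₆ ^ 2 * b₇ * h₃ + hb₃_eq - (1 + b₇) * hb₄_eq
  have hb₁_eq : b₁ = b₇ := by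
    apply mul_left_cancel₀ (mul_ne_zero (pow_ne_zero 2 hb₆) hb₃)
    linear_combination b₆ ^ 2 * h₂ - hb₃_eq + (b₆ * (1 + b₂) + (1 + b₆ + b₇)) * hb₂_eq
  refine ⟨mul_right_cancel₀ hb₂ ?_, hb₁_eq⟩
  linear_combination h₁ + hb₁_eq - hb₂_eq

/-- The Laurent monomial `z^μ = x^m y^n`, `μ = (m, n)`, in two arbitrary elements `x`, `y` of a
field; `zmon` is the case of the two coordinates of `K`. -/
def laurentMonomial (x y : F) (μ : ℤ × ℤ) : F := x ^ μ.1 * y ^ μ.2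

/-- The endomorphism `φ` acts on the Laurent monomials in `x` and `y` as the wall-crossing
transformation `𝒦_{γ,d}`. This is `IsWallCrossing` for a ring endomorphism of an arbitrary field,
where `x` and `y` need be neither generators nor algebraically independent. -/
def IsWallCrossingAt (x y : F) (d : ℤ) (γ : ℤ × ℤ) (φ : F →+* F) : Prop :=
  ∀ μ : ℤ × ℤ, φ (laurentMonomial x y μ) =
    laurentMonomial x y μ * (1 + laurentMonomial x y γ) ^ (d * pairing μ γ)

variable {x y : F}

theorem laurentMonomial_ne_zero (hx : x ≠ 0) (hy : y ≠ 0) (μ : ℤ × ℤ) :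
    laurentMonomial x y μ ≠ 0 :=
  mul_ne_zero (zpow_ne_zero _ hx) (zpow_ne_zero _ hy)

theorem laurentMonomial_zero : laurentMonomial x y 0 = 1 := by
  simp [laurentMonomial]

theorem laurentMonomial_add (hx : x ≠ 0) (hy : y ≠ 0) (μ ν : ℤ × ℤ) :
    laurentMonomial x y (μ + ν) = laurentMonomial x y μ * laurentMonomial x y ν := by
  simp only [laurentMonomial, Prod.fst_add, Prod.snd_add, zpow_add₀ hx, zpow_add₀ hy]
  ring

theorem laurentMonomial_zsmul (k : ℤ) (μ : ℤ × ℤ) :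
    laurentMonomial x y (k • μ) = laurentMonomial x y μ ^ k := by
  simp only [laurentMonomial, Prod.smul_fst, Prod.smul_snd, smul_eq_mul, mul_zpow, ← zpow_mul,
    mul_comm]

namespace IsWallCrossingAt

variable {d d' : ℤ} {γ γ' δ : ℤ × ℤ} {φ ψ : F →+* F}

theorem map_laurentMonomial_neg (h : IsWallCrossingAt x y d γ φ) :
    φ (laurentMonomial x y (-γ)) = laurentMonomial x y (-γ) := by
  have pairing_neg_self : pairing (-γ) γ = 0 := by
    simp only [pairing, Prod.fst_neg, Prod.snd_neg]
    ring
  simp [h (-γ), pairing_neg_self]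

theorem map_laurentMonomial_mul_eq_one_add_zpow (h : IsWallCrossingAt x y d γ φ)
    (hx : x ≠ 0) (hy : y ≠ 0) (hpair : pairing δ γ = 1) {δ' : ℤ × ℤ} (hsum : δ + δ' = d • -γ) :
    φ (laurentMonomial x y δ) * laurentMonomial x y δ' = (1 + laurentMonomial x y (-γ)) ^ d := by
  have mul_one_add : laurentMonomial x y (-γ) * (1 + laurentMonomial x y γ) =
      1 + laurentMonomial x y (-γ) := by
    rw [mul_add, mul_one, ← laurentMonomial_add hx hy, neg_add_cancel, laurentMonomial_zero,
      add_comm]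
  calc φ (laurentMonomial x y δ) * laurentMonomial x y δ'
      = laurentMonomial x y (δ + δ') * (1 + laurentMonomial x y γ) ^ d := by
        rw [h δ, hpair, mul_one, laurentMonomial_add hx hy, mul_right_comm]
    _ = (1 + laurentMonomial x y (-γ)) ^ d := by
        rw [hsum, laurentMonomial_zsmul, ← mul_zpow, mul_one_add]

theorem exchange_relation {L : Type*} [Field L] (hφ : IsWallCrossingAt x y d γ φ)
    (hψ : IsWallCrossingAt x y d' γ' ψ) (hx : x ≠ 0) (hy : y ≠ 0)
    (hpair : pairing δ γ = 1) (hsum : δ + -γ' = d • -γ) (χ : F →+* L) :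
    χ (ψ (φ (laurentMonomial x y δ))) * χ (laurentMonomial x y (-γ')) =
      (1 + χ (ψ (laurentMonomial x y (-γ)))) ^ d := by
  have := congrArg (χ.comp ψ)
    (hφ.map_laurentMonomial_mul_eq_one_add_zpow hx hy hpair hsum)
  simpa only [map_mul, map_zpow₀, map_add, map_one, RingHom.comp_apply,
    hψ.map_laurentMonomial_neg] using this

end IsWallCrossingAt

theorem map_laurentMonomial_zsmul_add_zsmul (φ : F →+* F) (hx : x ≠ 0) (hy : y ≠ 0)
    {α α' β β' : ℤ × ℤ} (hα : φ (laurentMonomial x y α) = laurentMonomial x y α')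
    (hβ : φ (laurentMonomial x y β) = laurentMonomial x y β') (k l : ℤ) :
    φ (laurentMonomial x y (k • α + l • β)) = laurentMonomial x y (k • α' + l • β') := by
  simp only [laurentMonomial_add hx hy, laurentMonomial_zsmul, map_mul, map_zpow₀, hα, hβ]

theorem B2_cancellation_general (hx : x ≠ 0) (hy : y ≠ 0) {φ₁ φ₂ φ₃ φ₄ φ₅ φ₆ : F →+* F}
    (h₁ : IsWallCrossingAt x y 1 (-1, 0) φ₁) (h₂ : IsWallCrossingAt x y 2 (0, 1) φ₂)
    (h₃ : IsWallCrossingAt x y 1 (1, 2) φ₃) (h₄ : IsWallCrossingAt x y 2 (1, 1) φ₄)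
    (h₅ : IsWallCrossingAt x y 1 (1, 0) φ₅) (h₆ : IsWallCrossingAt x y 2 (0, -1) φ₆)
    (μ : ℤ × ℤ) :
    φ₆ (φ₅ (φ₄ (φ₃ (φ₂ (φ₁ (laurentMonomial x y μ)))))) =
      laurentMonomial x y (μ.1 - μ.2, 2 * μ.1 - μ.2) := by
  let ψ₅ := φ₆.comp φ₅
  let ψ₄ := ψ₅.comp φ₄
  let ψ₃ := ψ₄.comp φ₃
  let ψ₂ := ψ₃.comp φ₂
  let ψ₁ := ψ₂.comp φ₁
  have e₁ := h₁.exchange_relation h₂ hx hy (δ := (1, 1)) rfl rfl ψ₃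
  have e₂ := h₂.exchange_relation h₃ hx hy (δ := (1, 0)) rfl rfl ψ₄
  have e₃ := h₃.exchange_relation h₄ hx hy (δ := (0, -1)) rfl rfl ψ₅
  have e₄ := h₄.exchange_relation h₅ hx hy (δ := (-1, -2)) rfl rfl φ₆
  have e₅ := h₅.exchange_relation h₆ hx hy (δ := (-1, -1)) rfl rfl (RingHom.id F)
  have e₆ := h₆.map_laurentMonomial_mul_eq_one_add_zpow hx hy (δ := (-1, 0)) (δ' := (1, 2)) rfl rfl
  simp only [zpow_ofNat, pow_one] at e₁ e₂ e₃ e₄ e₅ e₆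
  have ne_zero (χ : F →+* F) (ν : ℤ × ℤ) : χ (laurentMonomial x y ν) ≠ 0 :=
    (map_ne_zero χ).2 (laurentMonomial_ne_zero hx hy ν)
  obtain ⟨h₁₁, h₁₀⟩ := exchange_B2_periodic (ne_zero ψ₃ _) (ne_zero ψ₄ _) (ne_zero ψ₅ _)
    (ne_zero φ₆ _) (ne_zero (RingHom.id F) _) (laurentMonomial_ne_zero hx hy _) e₁ e₂ e₃ e₄ e₅ e₆
  have hψ₁₀ : ψ₁ (laurentMonomial x y (1, 0)) = laurentMonomial x y (1, 2) :=
    (congrArg ψ₂ h₁.map_laurentMonomial_neg).trans h₁₀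
  have hψ₁₁ : ψ₁ (laurentMonomial x y (1, 1)) = laurentMonomial x y (0, 1) := h₁₁
  have hμ : (μ.1 - μ.2) • (1, 0) + μ.2 • (1, 1) = μ := by
    ext <;> simp
  have hμ' : (μ.1 - μ.2) • (1, 2) + μ.2 • (0, 1) = (μ.1 - μ.2, 2 * μ.1 - μ.2) :=
    Prod.ext (by simp) (by simp; ring)
  have map_zsmul_add_zsmul :=
    map_laurentMonomial_zsmul_add_zsmul ψ₁ hx hy hψ₁₀ hψ₁₁ (μ.1 - μ.2) μ.2
  rwa [hμ, hμ'] at map_zsmul_add_zsmul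

end Field

theorem xx_ne_zero : xx ≠ 0 :=
  IsFractionRing.to_map_eq_zero_iff.not.2 (X_ne_zero 0)

theorem yy_ne_zero : yy ≠ 0 :=
  IsFractionRing.to_map_eq_zero_iff.not.2 (X_ne_zero 1)

/-- B₂ cancellation lemma: the composite
`𝒦_{(0,−1),2} ∘ 𝒦_{(1,0),1} ∘ 𝒦_{(1,1),2} ∘ 𝒦_{(1,2),1} ∘ 𝒦_{(0,1),2} ∘ 𝒦_{(−1,0),1}`
sends `z^μ ↦ z^{M⁻¹μ}` for every `μ ∈ ℤ²`, where `M(1,0) = (−1,−2)`, `M(0,1) = (1,1)`,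
so `M⁻¹(m,n) = (m−n, 2m−n)`; in particular `x ↦ xy²` and `y ↦ x⁻¹y⁻¹`. -/
theorem B2_cancellation
    (K1 K2 K3 K4 K5 K6 : K ≃ₐ[ℂ] K)
    (h1 : IsWallCrossing 1 (-1, 0) K1) (h2 : IsWallCrossing 2 (0, 1) K2)
    (h3 : IsWallCrossing 1 (1, 2) K3) (h4 : IsWallCrossing 2 (1, 1) K4)
    (h5 : IsWallCrossing 1 (1, 0) K5) (h6 : IsWallCrossing 2 (0, -1) K6) :
    ∀ μ : ℤ × ℤ, K6 (K5 (K4 (K3 (K2 (K1 (zmon μ)))))) =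
      zmon (μ.1 - μ.2, 2 * μ.1 - μ.2) :=
  B2_cancellation_general xx_ne_zero yy_ne_zero (φ₁ := K1) (φ₂ := K2) (φ₃ := K3) (φ₄ := K4)
    (φ₅ := K5) (φ₆ := K6) h1 h2 h3 h4 h5 h6

end
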